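/- arXiv:1310.5921 — 2 statements merged into one kernel-verified Lean document; each statement's English description precedes it below -/
import Mathlib

section
/- Let λ and α be nonzero real numbers and k ≥ 1 an integer. For every real number t with λ e^{α t} ≠ 1, the k-th derivative of the function h(t) = 1/(λ e^{α t} − 1) satisfies h^{(k)}(t) = (−1)^k α^k Σ_{m=1}^{k+1} (m−1)! S(k+1, m) (1/(λ e^{α t} − 1))^m. -/
open Real Finset

/-- Stirling numbers of the second kind, real-valued, via the explicit formula
`S(k,m) = (1/m!) ∑_{ℓ=1}^m (-1)^(m-ℓ) C(m,ℓ) ℓ^k`; this gives `0` when `m > k`. -/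
noncomputable def S2 (k m : ℕ) : ℝ :=
  (1 / (Nat.factorial m : ℝ)) *
    ∑ ℓ ∈ Finset.Icc 1 m, (-1 : ℝ) ^ (m - ℓ) * (Nat.choose m ℓ : ℝ) * (ℓ : ℝ) ^ k

lemma B_eq (n : ℕ) : ∀ m : ℕ,
    ∑ ℓ ∈ Finset.range (m + 1), (-1 : ℝ) ^ (m - ℓ) * (Nat.choose m ℓ : ℝ) * (ℓ : ℝ) ^ n
      = (Nat.factorial m : ℝ) * (Nat.stirlingSecond n m : ℝ) := by
  induction n with
  | zero =>
    intro m
    have h := add_pow (1 : ℝ) (-1) m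
    simp only [one_pow, one_mul, pow_zero, mul_one] at h ⊢
    rw [← h]
    cases m with
    | zero => simp
    | succ m => simp
  | succ n ih =>
    intro m
    cases m with
    | zero => simp
    | succ m =>
      have key : ∑ ℓ ∈ Finset.range (m + 1 + 1),
          (-1 : ℝ) ^ (m + 1 - ℓ) * (Nat.choose (m + 1) ℓ : ℝ) * (ℓ : ℝ) ^ (n + 1)
          = (m + 1 : ℝ) * (∑ ℓ ∈ Finset.range (m + 1 + 1),
              (-1 : ℝ) ^ (m + 1 - ℓ) * (Nat.choose (m + 1) ℓ : ℝ) * (ℓ : ℝ) ^ n)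
            + (m + 1 : ℝ) * (∑ ℓ ∈ Finset.range (m + 1),
              (-1 : ℝ) ^ (m - ℓ) * (Nat.choose m ℓ : ℝ) * (ℓ : ℝ) ^ n) := by
        rw [Finset.sum_range_succ, Finset.sum_range_succ (n := m + 1), mul_add, add_right_comm,
          Finset.mul_sum, Finset.mul_sum, ← Finset.sum_add_distrib]
        congr 1
        · refine Finset.sum_congr rfl fun ℓ hl => ?_
          have hl' : ℓ ≤ m := by simpa [Nat.lt_succ_iff] using hl
          have h := Nat.choose_mul_succ_eq m ℓ
          have h2 : (m.choose ℓ : ℝ) * (m + 1) = ((m + 1).choose ℓ : ℝ) * (m + 1 - ℓ) := by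
            have := congrArg (Nat.cast (R := ℝ)) h
            rw [Nat.cast_mul, Nat.cast_mul, Nat.cast_sub (by omega)] at this
            push_cast at this
            exact this
          rw [Nat.succ_sub hl', pow_succ, pow_succ]
          linear_combination (-(-1 : ℝ) ^ (m - ℓ) * (ℓ : ℝ) ^ n) * h2
        · push_cast; ring
      rw [key, ih, ih, Nat.stirlingSecond_succ_succ, Nat.factorial_succ]
      push_cast
      ring

lemma S2_eq (n m : ℕ) : S2 (n + 1) m = (Nat.stirlingSecond (n + 1) m : ℝ) := by
  have h := B_eq (n + 1) m
  rw [Finset.range_eq_Ico, Finset.sum_eq_sum_Ico_succ_bot (by omega)] at h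
  have e : Finset.Ico (0 + 1) (m + 1) = Finset.Icc 1 m := by
    ext; simp [Nat.lt_succ_iff]
  rw [e] at h
  unfold S2
  have : (Nat.factorial m : ℝ) ≠ 0 := by positivity
  simp only [Nat.cast_zero, ne_eq, Nat.add_eq_zero_iff, one_ne_zero, and_false,
    not_false_eq_true, zero_pow, mul_zero, zero_add] at h
  rw [h]
  field_simp

lemma sum_step (k : ℕ) (u : ℝ) :
    ∑ m ∈ Finset.range (k + 1), (Nat.factorial m : ℝ) * (Nat.stirlingSecond (k + 1) (m + 1) : ℝ)
        * (((m + 1 : ℕ) : ℝ) * u ^ m * (u + u ^ 2))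
      = ∑ m ∈ Finset.range (k + 2), (Nat.factorial m : ℝ)
        * (Nat.stirlingSecond (k + 2) (m + 1) : ℝ) * u ^ (m + 1) := by
  have h1 : ∀ m : ℕ, (Nat.factorial m : ℝ) * (Nat.stirlingSecond (k + 2) (m + 1) : ℝ) * u ^ (m + 1)
      = (Nat.factorial (m + 1) : ℝ) * (Nat.stirlingSecond (k + 1) (m + 1) : ℝ) * u ^ (m + 1)
        + (Nat.factorial m : ℝ) * (Nat.stirlingSecond (k + 1) m : ℝ) * u ^ (m + 1) := by
    intro m
    rw [Nat.stirlingSecond_succ_succ, Nat.factorial_succ]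
    push_cast
    ring
  simp_rw [h1]
  rw [Finset.sum_add_distrib, Finset.sum_range_succ (n := k + 1),
    Nat.stirlingSecond_eq_zero_of_lt (show k + 1 < k + 1 + 1 by omega),
    Finset.sum_range_succ' (n := k + 1), Nat.stirlingSecond_succ_zero]
  simp only [Nat.cast_zero, mul_zero, zero_mul, add_zero]
  rw [← Finset.sum_add_distrib]
  refine Finset.sum_congr rfl fun m _ => ?_
  rw [Nat.factorial_succ]
  push_cast
  ring

lemma main_aux (l a : ℝ) (k : ℕ) : ∀ t : ℝ, l * Real.exp (a * t) ≠ 1 →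
    iteratedDeriv k (fun t : ℝ => 1 / (l * Real.exp (a * t) - 1)) t =
      (-1 : ℝ) ^ k * a ^ k *
        ∑ m ∈ Finset.range (k + 1),
          (Nat.factorial m : ℝ) * (Nat.stirlingSecond (k + 1) (m + 1) : ℝ) *
            (1 / (l * Real.exp (a * t) - 1)) ^ (m + 1) := by
  induction k with
  | zero => intro t ht; simp [Nat.stirlingSecond_self]
  | succ k ih =>
    intro t ht
    have hev : ∀ᶠ s in nhds t, l * Real.exp (a * s) ≠ 1 := by
      have hc : Continuous fun s : ℝ => l * Real.exp (a * s) := by fun_prop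
      exact hc.continuousAt.eventually_ne ht
    rw [iteratedDeriv_succ, Filter.EventuallyEq.deriv_eq (hev.mono fun s hs => ih s hs)]
    have hne : l * Real.exp (a * t) - 1 ≠ 0 := sub_ne_zero.mpr ht
    have hu : HasDerivAt (fun s : ℝ => 1 / (l * Real.exp (a * s) - 1))
        (-a * (1 / (l * Real.exp (a * t) - 1) + (1 / (l * Real.exp (a * t) - 1)) ^ 2)) t := by
      have h0 : HasDerivAt (fun s : ℝ => l * Real.exp (a * s) - 1)
          (l * (Real.exp (a * t) * (a * 1))) t :=
        ((((hasDerivAt_id t).const_mul a).exp).const_mul l).sub_const 1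
      have h1 := h0.inv hne
      simp only [one_div]
      refine h1.congr_deriv ?_
      field_simp
      ring
    have hs := (HasDerivAt.fun_sum (u := Finset.range (k + 1)) fun m _ =>
      ((hu.fun_pow (m + 1)).const_mul
        ((Nat.factorial m : ℝ) * (Nat.stirlingSecond (k + 1) (m + 1) : ℝ)))).const_mul
          ((-1 : ℝ) ^ k * a ^ k)
    rw [hs.deriv, ← sum_step, Finset.mul_sum, Finset.mul_sum]
    refine Finset.sum_congr rfl fun m _ => ?_
    rw [Nat.add_sub_cancel]
    ring

theorem stmt_9 (l a : ℝ) (hl : l ≠ 0) (ha : a ≠ 0) (k : ℕ) (hk : 1 ≤ k) (t : ℝ)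
    (ht : l * Real.exp (a * t) ≠ 1) :
    iteratedDeriv k (fun t : ℝ => 1 / (l * Real.exp (a * t) - 1)) t =
      (-1 : ℝ) ^ k * a ^ k *
        ∑ m ∈ Finset.Icc 1 (k + 1),
          (Nat.factorial (m - 1) : ℝ) * S2 (k + 1) m *
            (1 / (l * Real.exp (a * t) - 1)) ^ m := by
  rw [main_aux l a k t ht]
  have e : Finset.Icc 1 (k + 1) = Finset.Ico 1 (k + 1 + 1) := by
    ext; simp [Nat.lt_succ_iff]
  rw [e, Finset.sum_Ico_eq_sum_range]
  simp only [S2_eq, Nat.add_sub_cancel, add_comm 1, Nat.add_sub_cancel_left]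
end

section
/- Let λ and α be nonzero real numbers and k ≥ 1 an integer. For every real number t with λ e^{α t} ≠ 1, the k-th power of the function h(t) = 1/(λ e^{α t} − 1) satisfies (1/(λ e^{α t} − 1))^k = (1/(k−1)!) Σ_{m=1}^{k} ((−1)^{m−1}/α^{m−1}) s(k, m) h^{(m−1)}(t), where h^{(m−1)} denotes the (m−1)-st derivative of h (with h^{(0)} = h). -/
open Real Finset

/-- Signed Stirling numbers of the first kind, real-valued: the coefficient of `x^m` in
`x (x-1) ⋯ (x-k+1)`. -/
noncomputable def s1 (k m : ℕ) : ℝ := (descPochhammer ℝ k).coeff m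

theorem s1_zero (n : ℕ) : s1 (n + 1) 0 = 0 := by
  simp [s1, descPochhammer_succ_left]

theorem s1_top (n : ℕ) : s1 n (n + 1) = 0 := by
  unfold s1
  apply Polynomial.coeff_eq_zero_of_natDegree_lt
  rw [descPochhammer_natDegree]
  omega

theorem s1_rec (n j : ℕ) : s1 (n + 1) (j + 1) = s1 n j - n * s1 n (j + 1) := by
  unfold s1
  rw [descPochhammer_succ_right, mul_sub, Polynomial.coeff_sub, Polynomial.coeff_mul_X,
    Polynomial.coeff_mul_natCast, mul_comm]

theorem aux_main (l a : ℝ) (ha : a ≠ 0) (h : ℝ → ℝ)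
    (hh : h = fun t : ℝ => 1 / (l * Real.exp (a * t) - 1)) (n : ℕ) :
    ∀ t : ℝ, l * Real.exp (a * t) ≠ 1 →
      (n.factorial : ℝ) * h t ^ (n + 1) =
        ∑ j ∈ range (n + 1), (-1 / a) ^ j * s1 (n + 1) (j + 1) * iteratedDeriv j h t := by
  induction n with
  | zero =>
    intro t ht
    simp [s1]
  | succ n ih =>
    intro t ht
    have hne : l * Real.exp (a * t) - 1 ≠ 0 := sub_ne_zero.mpr ht
    have hd : HasDerivAt h (-a * (h t + h t ^ 2)) t := by
      have h1 : HasDerivAt (fun t : ℝ => l * Real.exp (a * t) - 1)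
          (l * (Real.exp (a * t) * (a * 1))) t :=
        ((((hasDerivAt_id t).const_mul a).exp).const_mul l).sub_const 1
      have h2 := h1.inv hne
      rw [hh]
      simp only [one_div]
      refine h2.congr_deriv ?_
      field_simp
      ring
    have hsm : AnalyticAt ℝ h t := by
      rw [hh]
      exact analyticAt_const.div (by fun_prop) hne
    have hit : ∀ j : ℕ, HasDerivAt (iteratedDeriv j h) (iteratedDeriv (j + 1) h t) t := by
      intro j
      rw [iteratedDeriv_succ]
      apply DifferentiableAt.hasDerivAt
      rw [iteratedDeriv_eq_iterate]
      exact (hsm.iterated_deriv j).differentiableAt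
    have hev : ∀ᶠ x in nhds t, l * Real.exp (a * x) ≠ 1 := by
      have hc : Continuous fun x : ℝ => l * Real.exp (a * x) := by fun_prop
      exact hc.continuousAt.eventually_ne ht
    have hL : HasDerivAt (fun x => (n.factorial : ℝ) * h x ^ (n + 1))
        ((n.factorial : ℝ) * (((n + 1 : ℕ) : ℝ) * h t ^ n * (-a * (h t + h t ^ 2)))) t :=
      (hd.pow (n + 1)).const_mul _
    have hR : HasDerivAt (fun x => ∑ j ∈ range (n + 1),
        (-1 / a) ^ j * s1 (n + 1) (j + 1) * iteratedDeriv j h x)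
        (∑ j ∈ range (n + 1),
          (-1 / a) ^ j * s1 (n + 1) (j + 1) * iteratedDeriv (j + 1) h t) t :=
      HasDerivAt.fun_sum fun j _ => (hit j).const_mul _
    have hE := hL.unique (hR.congr_of_eventuallyEq (hev.mono fun x hx => ih x hx))
    have e1 : ∑ j ∈ range (n + 2), (-1 / a) ^ j * s1 (n + 1) j * iteratedDeriv j h t
        = (-1 / a) * ∑ j ∈ range (n + 1),
          (-1 / a) ^ j * s1 (n + 1) (j + 1) * iteratedDeriv (j + 1) h t := by
      rw [sum_range_succ', s1_zero, mul_sum]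
      simp only [mul_zero, zero_mul, add_zero]
      refine sum_congr rfl fun j _ => ?_
      ring
    have e2 : ∑ j ∈ range (n + 2), (-1 / a) ^ j * s1 (n + 1) (j + 1) * iteratedDeriv j h t
        = (n.factorial : ℝ) * h t ^ (n + 1) := by
      rw [sum_range_succ, s1_top, ih t ht]
      simp
    have e3 : ∑ j ∈ range (n + 1 + 1),
        (-1 / a) ^ j * s1 (n + 1 + 1) (j + 1) * iteratedDeriv j h t
        = ∑ j ∈ range (n + 2), (-1 / a) ^ j * s1 (n + 1) j * iteratedDeriv j h t
        - ((n + 1 : ℕ) : ℝ) * ∑ j ∈ range (n + 2),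
          (-1 / a) ^ j * s1 (n + 1) (j + 1) * iteratedDeriv j h t := by
      rw [mul_sum, ← sum_sub_distrib]
      refine sum_congr rfl fun j _ => ?_
      rw [s1_rec (n + 1) j]
      ring
    rw [e3, e1, e2, ← hE, Nat.factorial_succ]
    push_cast
    field_simp
    ring

theorem stmt_10 (l a : ℝ) (hl : l ≠ 0) (ha : a ≠ 0) (k : ℕ) (hk : 1 ≤ k) (t : ℝ)
    (ht : l * Real.exp (a * t) ≠ 1) :
    (1 / (l * Real.exp (a * t) - 1)) ^ k =
      (1 / (Nat.factorial (k - 1) : ℝ)) *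
        ∑ m ∈ Finset.Icc 1 k,
          ((-1 : ℝ) ^ (m - 1) / a ^ (m - 1)) * s1 k m *
            iteratedDeriv (m - 1) (fun t : ℝ => 1 / (l * Real.exp (a * t) - 1)) t := by
  obtain ⟨n, rfl⟩ : ∃ n, k = n + 1 := ⟨k - 1, by omega⟩
  have key := aux_main l a ha _ rfl n t ht
  have hs : ∑ m ∈ Finset.Icc 1 (n + 1),
          ((-1 : ℝ) ^ (m - 1) / a ^ (m - 1)) * s1 (n + 1) m *
            iteratedDeriv (m - 1) (fun t : ℝ => 1 / (l * Real.exp (a * t) - 1)) t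
      = ∑ j ∈ range (n + 1), (-1 / a) ^ j * s1 (n + 1) (j + 1) *
          iteratedDeriv j (fun t : ℝ => 1 / (l * Real.exp (a * t) - 1)) t := by
    rw [← Finset.Ico_add_one_right_eq_Icc, Finset.sum_Ico_eq_sum_range]
    refine sum_congr (by simp) fun j _ => ?_
    rw [Nat.add_sub_cancel_left, add_comm 1 j, div_pow]
  rw [hs, ← key, Nat.add_sub_cancel]
  have : (n.factorial : ℝ) ≠ 0 := by exact_mod_cast n.factorial_ne_zero
  rw [← mul_assoc, one_div_mul_cancel this, one_mul]
end
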